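/- Let (A, C, ψ) be a right-right entwining structure over a commutative ring k, g ∈ C grouplike, and B = A^{co C} = {b ∈ A : ψ(g ⊗ b) = b ⊗ g}. Then (A, C, ψ, g) is cleft if and only if both of the following hold: (i) the map *can sending f ∈ Hom_k(C, A) to the endomorphism a ↦ Σ a_ψ f(g^ψ) of A is a bijection from Hom_k(C, A) onto the set of left B-linear endomorphisms of A; and (ii) (A, C, ψ, g) satisfies the right normal basis property, i.e. there exists a bijection B ⊗_k C → A that is left B-linear (B acting on the first factor of B ⊗_k C and by left multiplication on A) and right C-colinear (B ⊗_k C carrying the coaction id_B ⊗ Δ and A the coaction a ↦ ψ(g ⊗ a)). -/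

import Mathlib

open TensorProduct CoalgebraStruct

universe u

section Entwining

variable (k A C : Type u) [CommRing k] [Ring A] [Algebra k A]
  [AddCommGroup C] [Module k C] [Coalgebra k C]

/-- The map `A ⊗ C → A ⊗ C`, `a ⊗ c ↦ Σ a · b_ψ ⊗ c^ψ` (entwine with `b` and multiply). -/
noncomputable def entwineRight (ψ : C ⊗[k] A →ₗ[k] A ⊗[k] C) (b : A) :
    A ⊗[k] C →ₗ[k] A ⊗[k] C :=
  LinearMap.rTensor C (LinearMap.mul' k A) ∘ₗ
    (TensorProduct.assoc k A A C).symm.toLinearMap ∘ₗ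
    LinearMap.lTensor A (ψ ∘ₗ (TensorProduct.mk k C A).flip b)

/-- The map `(C ⊗ C) ⊗ A → A ⊗ (C ⊗ C)`,
`c ⊗ c' ⊗ a ↦ Σ a_{ψΨ} ⊗ c^Ψ ⊗ c'^ψ`. -/
noncomputable def entwineTwice (ψ : C ⊗[k] A →ₗ[k] A ⊗[k] C) :
    (C ⊗[k] C) ⊗[k] A →ₗ[k] A ⊗[k] (C ⊗[k] C) :=
  (TensorProduct.assoc k A C C).toLinearMap ∘ₗ
    LinearMap.rTensor C ψ ∘ₗ
    (TensorProduct.assoc k C A C).symm.toLinearMap ∘ₗ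
    LinearMap.lTensor C ψ ∘ₗ
    (TensorProduct.assoc k C C A).toLinearMap

/-- `(A, C, ψ)` is a right-right entwining structure. -/
noncomputable def IsEntwining (ψ : C ⊗[k] A →ₗ[k] A ⊗[k] C) : Prop :=
  (∀ (c : C) (a b : A), ψ (c ⊗ₜ[k] (a * b)) = entwineRight k A C ψ b (ψ (c ⊗ₜ[k] a))) ∧
  (∀ c : C, ψ (c ⊗ₜ[k] (1 : A)) = (1 : A) ⊗ₜ[k] c) ∧
  (∀ (c : C) (a : A),
      LinearMap.lTensor A (comul (R := k)) (ψ (c ⊗ₜ[k] a)) =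
        entwineTwice k A C ψ ((comul c) ⊗ₜ[k] a)) ∧
  (∀ (c : C) (a : A),
      TensorProduct.rid k A (LinearMap.lTensor A (counit (R := k)) (ψ (c ⊗ₜ[k] a))) =
        (counit (R := k) c) • a)

/-- `g ∈ C` is a grouplike element. -/
def IsGrouplikeElem (g : C) : Prop := comul g = g ⊗ₜ[k] g ∧ counit (R := k) g = 1

/-- Membership in `Q`: `ψ(c_1 ⊗ q(c_2)) = q(c) ⊗ g` for all `c`. -/
def MemQ (ψ : C ⊗[k] A →ₗ[k] A ⊗[k] C) (g : C) (q : C →ₗ[k] A) : Prop :=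
  ∀ c : C, ψ (LinearMap.lTensor C q (comul c)) = q c ⊗ₜ[k] g

/-- The convolution product on `Hom_k(C, A)`. -/
noncomputable def conv (f h : C →ₗ[k] A) : C →ₗ[k] A :=
  LinearMap.mul' k A ∘ₗ TensorProduct.map f h ∘ₗ comul

/-- The unit of the convolution algebra: `c ↦ ε(c) 1`. -/
noncomputable def convUnit : C →ₗ[k] A :=
  Algebra.linearMap k A ∘ₗ counit

end Entwining

section Cleft

variable (k A C : Type u) [CommRing k] [Ring A] [Algebra k A]
  [AddCommGroup C] [Module k C] [Coalgebra k C]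

noncomputable def coinvAlgebra (ψ : C ⊗[k] A →ₗ[k] A ⊗[k] C) (hψ : IsEntwining k A C ψ)
    (g : C) : Subalgebra k A where
  carrier := {b : A | ψ (g ⊗ₜ[k] b) = b ⊗ₜ[k] g}
  mul_mem' := by
    intro a b (ha : ψ (g ⊗ₜ[k] a) = a ⊗ₜ[k] g) (hb : ψ (g ⊗ₜ[k] b) = b ⊗ₜ[k] g)
    show ψ (g ⊗ₜ[k] (a * b)) = (a * b) ⊗ₜ[k] g
    rw [hψ.1 g a b, ha, entwineRight]
    simp only [LinearMap.coe_comp, LinearEquiv.coe_coe, Function.comp_apply,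
      LinearMap.lTensor_tmul, LinearMap.comp_apply, TensorProduct.mk_apply,
      LinearMap.flip_apply, hb, TensorProduct.assoc_symm_tmul,
      LinearMap.rTensor_tmul, LinearMap.mul'_apply]
  one_mem' := hψ.2.1 g
  add_mem' := by
    intro a b (ha : ψ (g ⊗ₜ[k] a) = a ⊗ₜ[k] g) (hb : ψ (g ⊗ₜ[k] b) = b ⊗ₜ[k] g)
    show ψ (g ⊗ₜ[k] (a + b)) = (a + b) ⊗ₜ[k] g
    rw [tmul_add, map_add, ha, hb, add_tmul]
  algebraMap_mem' := by
    intro r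
    show ψ (g ⊗ₜ[k] algebraMap k A r) = algebraMap k A r ⊗ₜ[k] g
    rw [Algebra.algebraMap_eq_smul_one, tmul_smul, map_smul, hψ.2.1, smul_tmul']

end Cleft

section Cleft2

variable (k A C : Type u) [CommRing k] [Ring A] [Algebra k A]
  [AddCommGroup C] [Module k C] [Coalgebra k C]

/-- The map `*can : Hom_k(C, A) → End(A)`, `f ↦ (a ↦ Σ a_ψ f(g^ψ))`. -/
noncomputable def canStar (ψ : C ⊗[k] A →ₗ[k] A ⊗[k] C) (g : C) (f : C →ₗ[k] A) :
    A →ₗ[k] A :=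
  LinearMap.mul' k A ∘ₗ LinearMap.lTensor A f ∘ₗ ψ ∘ₗ TensorProduct.mk k C A g


/-- The action map `A ⊗ M → M`. -/
noncomputable def actMap (M : Type u) [AddCommGroup M] [Module k M] [Module A M]
    [IsScalarTower k A M] : A ⊗[k] M →ₗ[k] M :=
  TensorProduct.lift (Algebra.lsmul k k M : A →ₐ[k] Module.End k M).toLinearMap

variable {k A C}

@[simp] theorem actMap_tmul {M : Type u} [AddCommGroup M] [Module k M] [Module A M]
    [IsScalarTower k A M] (a : A) (m : M) : actMap k A M (a ⊗ₜ[k] m) = a • m := rfl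

section helpers

variable {M : Type u} [AddCommGroup M] [Module k M] [Module A M] [IsScalarTower k A M]

/-- `c ↦ f(c_1) h(c_2)`. -/
noncomputable def cact (f : C →ₗ[k] A) (h : C →ₗ[k] M) : C →ₗ[k] M :=
  actMap k A M ∘ₗ TensorProduct.map f h ∘ₗ comul

/-- `a ↦ p(a_0) h(a_1)`. -/
noncomputable def dact (ρ : A →ₗ[k] A ⊗[k] C) (p : A →ₗ[k] A) (h : C →ₗ[k] M) : A →ₗ[k] M :=
  actMap k A M ∘ₗ TensorProduct.map p h ∘ₗ ρ

theorem cact_eq_conv (f h : C →ₗ[k] A) : cact f h = conv k A C f h := by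
  have : actMap k A A = LinearMap.mul' k A := by ext; simp
  rw [cact, this, conv]

theorem cact_conv (f f' : C →ₗ[k] A) (h : C →ₗ[k] M) :
    cact (conv k A C f f') h = cact f (cact f' h) := by
  let Φ : C ⊗[k] (C ⊗[k] C) →ₗ[k] M :=
    actMap k A M ∘ₗ TensorProduct.map f (actMap k A M ∘ₗ TensorProduct.map f' h)
  have h1 : ∀ t : C ⊗[k] C, actMap k A M (TensorProduct.map (conv k A C f f') h t) =
      Φ (TensorProduct.assoc k C C C (LinearMap.rTensor C comul t)) := by
    intro t
    induction t with
    | zero => simp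
    | add x y hx hy => simp only [map_add, hx, hy]
    | tmul x y =>
      simp only [TensorProduct.map_tmul, conv, LinearMap.comp_apply, LinearMap.rTensor_tmul]
      generalize (comul x : C ⊗[k] C) = s
      induction s with
      | zero => simp
      | add x y hx hy => simp only [map_add, hx, hy, add_tmul]
      | tmul u v => simp [Φ, mul_smul]
  have h2 : ∀ t : C ⊗[k] C, actMap k A M (TensorProduct.map f (cact f' h) t) =
      Φ (LinearMap.lTensor C comul t) := by
    intro t
    induction t with
    | zero => simp
    | add x y hx hy => simp only [map_add, hx, hy]
    | tmul x y => simp [Φ, cact]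
  ext c
  rw [cact, LinearMap.comp_apply, LinearMap.comp_apply, h1, Coalgebra.coassoc_apply, ← h2]
  rfl

theorem cact_unit (h : C →ₗ[k] M) : cact (convUnit k A C) h = h := by
  have h1 : ∀ t : C ⊗[k] C, actMap k A M (TensorProduct.map (convUnit k A C) h t) =
      h (TensorProduct.lid k C (LinearMap.rTensor C counit t)) := by
    intro t
    induction t with
    | zero => simp
    | add x y hx hy => simp only [map_add, hx, hy]
    | tmul x y => simp [convUnit]
  ext c
  rw [cact, LinearMap.comp_apply, LinearMap.comp_apply, h1, Coalgebra.rTensor_counit_comul]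
  simp

theorem dact_mu (ρ : A →ₗ[k] A ⊗[k] C) (p : A →ₗ[k] A) (h : C →ₗ[k] M) (μ : C →ₗ[k] A)
    (hμ : ∀ c, ρ (μ c) = LinearMap.rTensor C μ (comul c)) (c : C) :
    dact ρ p h (μ c) = cact (p ∘ₗ μ) h c := by
  simp only [dact, cact, LinearMap.comp_apply, hμ]
  generalize (comul c : C ⊗[k] C) = s
  induction s with
  | zero => simp
  | add x y hx hy => simp only [map_add, hx, hy]
  | tmul u v => simp

theorem dact_cact (ρ : A →ₗ[k] A ⊗[k] C)
    (hρ : ∀ a, TensorProduct.assoc k A C C (LinearMap.rTensor C ρ (ρ a)) =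
      LinearMap.lTensor A comul (ρ a)) (f : C →ₗ[k] A) (h : C →ₗ[k] M) :
    dact ρ LinearMap.id (cact f h) = dact ρ (dact ρ LinearMap.id f) h := by
  let Φ : A ⊗[k] (C ⊗[k] C) →ₗ[k] M :=
    actMap k A M ∘ₗ TensorProduct.map LinearMap.id (actMap k A M ∘ₗ TensorProduct.map f h)
  have h1 : ∀ t : A ⊗[k] C, actMap k A M (TensorProduct.map (dact ρ LinearMap.id f) h t) =
      Φ (TensorProduct.assoc k A C C (LinearMap.rTensor C ρ t)) := by
    intro t
    induction t with
    | zero => simp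
    | add x y hx hy => simp only [map_add, hx, hy]
    | tmul x y =>
      simp only [TensorProduct.map_tmul, dact, LinearMap.comp_apply, LinearMap.rTensor_tmul]
      generalize ρ x = s
      induction s with
      | zero => simp
      | add x y hx hy => simp only [map_add, hx, hy, add_tmul]
      | tmul u v => simp [Φ, mul_smul]
  have h2 : ∀ t : A ⊗[k] C, actMap k A M (TensorProduct.map LinearMap.id (cact f h) t) =
      Φ (LinearMap.lTensor A comul t) := by
    intro t
    induction t with
    | zero => simp
    | add x y hx hy => simp only [map_add, hx, hy]
    | tmul x y => simp [Φ, cact]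
  ext a
  rw [dact, LinearMap.comp_apply, LinearMap.comp_apply, h2, ← hρ, ← h1]
  rfl

theorem dact_smul (ρ : A →ₗ[k] A ⊗[k] C) (h : C →ₗ[k] M) (b a : A)
    (hb : ρ (b * a) = b • ρ a) :
    dact ρ LinearMap.id h (b * a) = b • dact ρ LinearMap.id h a := by
  simp only [dact, LinearMap.comp_apply, hb]
  generalize ρ a = s
  induction s with
  | zero => simp
  | add x y hx hy => simp only [map_add, smul_add, hx, hy]
  | tmul u v => simp [TensorProduct.smul_tmul', mul_smul]

end helpers

/-- The coaction `a ↦ ψ(g ⊗ a)`. -/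
noncomputable def coact (ψ : C ⊗[k] A →ₗ[k] A ⊗[k] C) (g : C) : A →ₗ[k] A ⊗[k] C :=
  ψ ∘ₗ TensorProduct.mk k C A g

theorem coact_apply (ψ : C ⊗[k] A →ₗ[k] A ⊗[k] C) (g : C) (a : A) :
    coact ψ g a = ψ (g ⊗ₜ a) := rfl

/-- `c ↦ ψ(c_1 ⊗ f(c_2))`. -/
noncomputable def sig (ψ : C ⊗[k] A →ₗ[k] A ⊗[k] C) (f : C →ₗ[k] A) : C →ₗ[k] A ⊗[k] C :=
  ψ ∘ₗ LinearMap.lTensor C f ∘ₗ comul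

theorem canStar_eq (ψ : C ⊗[k] A →ₗ[k] A ⊗[k] C) (g : C) (f : C →ₗ[k] A) :
    canStar k A C ψ g f = dact (coact ψ g) LinearMap.id f := by
  have : actMap k A A = LinearMap.mul' k A := by ext; simp
  rw [dact, this]; rfl

variable {ψ : C ⊗[k] A →ₗ[k] A ⊗[k] C} {g : C}

theorem entwine_mul (hψ : IsEntwining k A C ψ) (c : C) (a b : A) :
    ψ (c ⊗ₜ (a * b)) =
      actMap k A (A ⊗[k] C) (LinearMap.lTensor A (ψ ∘ₗ (TensorProduct.mk k C A).flip b)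
        (ψ (c ⊗ₜ a))) := by
  rw [hψ.1, entwineRight]
  generalize ψ (c ⊗ₜ a) = s
  induction s with
  | zero => simp
  | add x y hx hy => simp only [map_add, hx, hy]
  | tmul u v =>
    simp only [LinearMap.comp_apply, LinearMap.lTensor_tmul, LinearMap.flip_apply,
      TensorProduct.mk_apply, actMap_tmul, LinearEquiv.coe_coe]
    generalize ψ (v ⊗ₜ b) = s
    induction s with
    | zero => simp
    | add x y hx hy => simp only [map_add, hx, hy, tmul_add, smul_add]
    | tmul u v => simp [TensorProduct.smul_tmul']

theorem coact_coassoc (hψ : IsEntwining k A C ψ) (hg : IsGrouplikeElem k C g) (a : A) :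
    TensorProduct.assoc k A C C (LinearMap.rTensor C (coact ψ g) (coact ψ g a)) =
      LinearMap.lTensor A comul (coact ψ g a) := by
  rw [coact_apply, hψ.2.2.1, hg.1, entwineTwice]
  simp only [LinearMap.comp_apply, LinearEquiv.coe_coe, TensorProduct.assoc_tmul,
    LinearMap.lTensor_tmul]
  generalize ψ (g ⊗ₜ a) = s
  induction s with
  | zero => simp
  | add x y hx hy => simp only [map_add, hx, hy, tmul_add]
  | tmul u v => simp [coact_apply]

theorem dact_unit (hψ : IsEntwining k A C ψ) (hg : IsGrouplikeElem k C g) :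
    dact (coact ψ g) LinearMap.id (convUnit k A C) = LinearMap.id := by
  ext a
  have h := hψ.2.2.2 g a
  rw [hg.2, one_smul] at h
  simp only [dact, LinearMap.comp_apply, coact_apply, LinearMap.id_apply]
  refine Eq.trans ?_ h
  generalize ψ (g ⊗ₜ a) = s
  induction s with
  | zero => simp
  | add x y hx hy => simp only [map_add, hx, hy]
  | tmul u v => simp [convUnit, Algebra.algebraMap_eq_smul_one]

theorem coact_mul (hψ : IsEntwining k A C ψ) {b : A} (hb : coact ψ g b = b ⊗ₜ g) (a : A) :
    coact ψ g (b * a) = b • coact ψ g a := by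
  rw [coact_apply] at hb
  rw [coact_apply, entwine_mul hψ, hb]
  simp [coact_apply]

theorem coact_dact (hψ : IsEntwining k A C ψ) (hg : IsGrouplikeElem k C g) (f : C →ₗ[k] A)
    (a : A) : coact ψ g (dact (coact ψ g) LinearMap.id f a) =
      dact (coact ψ g) LinearMap.id (sig ψ f) a := by
  let Φ : A ⊗[k] (C ⊗[k] C) →ₗ[k] A ⊗[k] C :=
    actMap k A (A ⊗[k] C) ∘ₗ LinearMap.lTensor A (ψ ∘ₗ LinearMap.lTensor C f)
  have h1 : ∀ t : A ⊗[k] C, coact ψ g (actMap k A A (TensorProduct.map LinearMap.id f t)) =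
      Φ (TensorProduct.assoc k A C C (LinearMap.rTensor C (coact ψ g) t)) := by
    intro t
    induction t with
    | zero => simp
    | add x y hx hy => simp only [map_add, hx, hy]
    | tmul x y =>
      simp only [TensorProduct.map_tmul, actMap_tmul, LinearMap.rTensor_tmul, LinearMap.id_apply,
        smul_eq_mul, coact_apply, entwine_mul hψ]
      generalize ψ (g ⊗ₜ x) = s
      induction s with
      | zero => simp
      | add x y hx hy => simp only [map_add, hx, hy, add_tmul]
      | tmul u v => simp [Φ]
  have h2 : ∀ t : A ⊗[k] C, actMap k A _ (TensorProduct.map LinearMap.id (sig ψ f) t) =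
      Φ (LinearMap.lTensor A comul t) := by
    intro t
    induction t with
    | zero => simp
    | add x y hx hy => simp only [map_add, hx, hy]
    | tmul x y => simp [Φ, sig]
  simp only [dact, LinearMap.comp_apply]
  rw [h1, h2, coact_coassoc hψ hg]

theorem sig_conv (hψ : IsEntwining k A C ψ) {f : C →ₗ[k] A} (hf : MemQ k A C ψ g f)
    (h : C →ₗ[k] A) : sig ψ (conv k A C f h) = cact f (coact ψ g ∘ₗ h) := by
  let E : (A ⊗[k] C) ⊗[k] C →ₗ[k] A ⊗[k] C :=
    actMap k A (A ⊗[k] C) ∘ₗ LinearMap.lTensor A (ψ ∘ₗ LinearMap.lTensor C h) ∘ₗ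
      (TensorProduct.assoc k A C C).toLinearMap
  have h0 : ∀ (x y z : C), ψ (x ⊗ₜ (f y * h z)) = E (ψ (x ⊗ₜ f y) ⊗ₜ z) := by
    intro x y z
    rw [entwine_mul hψ]
    generalize ψ (x ⊗ₜ f y) = s
    induction s with
    | zero => simp
    | add x y hx hy => simp only [map_add, hx, hy, add_tmul]
    | tmul u v => simp [E]
  let Φ : C ⊗[k] (C ⊗[k] C) →ₗ[k] A ⊗[k] C :=
    ψ ∘ₗ LinearMap.lTensor C (LinearMap.mul' k A ∘ₗ TensorProduct.map f h)
  have h1 : ∀ t : C ⊗[k] C, ψ (LinearMap.lTensor C (conv k A C f h) t) =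
      Φ (LinearMap.lTensor C comul t) := by
    intro t
    induction t with
    | zero => simp
    | add x y hx hy => simp only [map_add, hx, hy]
    | tmul x y => simp [Φ, conv]
  have h3 : ∀ (s : C ⊗[k] C) (y : C), Φ (TensorProduct.assoc k C C C (s ⊗ₜ y)) =
      E (ψ (LinearMap.lTensor C f s) ⊗ₜ y) := by
    intro s y
    induction s with
    | zero => simp
    | add x y hx hy => simp only [map_add, hx, hy, add_tmul]
    | tmul u v => simp [Φ, h0]
  have h2 : ∀ t : C ⊗[k] C, Φ (TensorProduct.assoc k C C C (LinearMap.rTensor C comul t)) =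
      actMap k A _ (TensorProduct.map f (coact ψ g ∘ₗ h) t) := by
    intro t
    induction t with
    | zero => simp
    | add x y hx hy => simp only [map_add, hx, hy]
    | tmul x y =>
      rw [LinearMap.rTensor_tmul, h3, hf]
      simp [E, coact_apply]
  ext c
  simp only [sig, cact, LinearMap.comp_apply]
  rw [h1, ← Coalgebra.coassoc_apply, h2]

theorem sig_unit (hψ : IsEntwining k A C ψ) :
    sig ψ (convUnit k A C) = TensorProduct.mk k A C 1 := by
  have h1 : ∀ t : C ⊗[k] C, ψ (LinearMap.lTensor C (convUnit k A C) t) =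
      (1 : A) ⊗ₜ (TensorProduct.rid k C (LinearMap.lTensor C counit t)) := by
    intro t
    induction t with
    | zero => simp
    | add x y hx hy => simp only [map_add, hx, hy, tmul_add]
    | tmul x y => simp [convUnit, Algebra.algebraMap_eq_smul_one, hψ.2.1]
  ext c
  simp only [sig, LinearMap.comp_apply]
  rw [h1, Coalgebra.lTensor_counit_comul]
  simp

theorem cact_mk (μ : C →ₗ[k] A) (c : C) :
    cact μ (TensorProduct.mk k A C 1) c = LinearMap.rTensor C μ (comul c) := by
  simp only [cact, LinearMap.comp_apply]
  generalize (comul c : C ⊗[k] C) = s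
  induction s with
  | zero => simp
  | add x y hx hy => simp only [map_add, hx, hy]
  | tmul u v => simp [TensorProduct.smul_tmul']

theorem mem_coinv (hψ : IsEntwining k A C ψ) (b : A) :
    b ∈ coinvAlgebra k A C ψ hψ g ↔ coact ψ g b = b ⊗ₜ g := Iff.rfl

/-- `h` followed by `· ⊗ g` commutes with `dact`. -/
theorem dact_flip (ρ : A →ₗ[k] A ⊗[k] C) (f : C →ₗ[k] A) (g : C) (a : A) :
    dact ρ LinearMap.id ((TensorProduct.mk k A C).flip g ∘ₗ f) a =
      dact ρ LinearMap.id f a ⊗ₜ g := by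
  simp only [dact, LinearMap.comp_apply]
  generalize ρ a = s
  induction s with
  | zero => simp
  | add x y hx hy => simp only [map_add, hx, hy, add_tmul]
  | tmul u v => simp [TensorProduct.smul_tmul']

theorem memQ_iff (f : C →ₗ[k] A) :
    MemQ k A C ψ g f ↔ sig ψ f = (TensorProduct.mk k A C).flip g ∘ₗ f :=
  ⟨fun h => LinearMap.ext h, fun h c => LinearMap.congr_fun h c⟩

variable (k A C)

/-- `(A, C, ψ, g)` is cleft iff `*can` is a bijection of `Hom_k(C, A)` onto the left
`B`-linear endomorphisms of `A`, and `(A, C, ψ, g)` has the right normal basis property,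
i.e. there is a left `B`-linear right `C`-colinear bijection `B ⊗_k C → A`,
where `B = A^{co C}`. -/
theorem cleft_iff_canStar_bijective_and_normalBasis
    (ψ : C ⊗[k] A →ₗ[k] A ⊗[k] C) (hψ : IsEntwining k A C ψ)
    (g : C) (hg : IsGrouplikeElem k C g) :
    (∃ lam lamInv : C →ₗ[k] A, MemQ k A C ψ g lam ∧
        conv k A C lam lamInv = convUnit k A C ∧
        conv k A C lamInv lam = convUnit k A C) ↔
    ((Function.Injective (canStar k A C ψ g) ∧
        Set.range (canStar k A C ψ g) =
          {φ : A →ₗ[k] A | ∀ b ∈ coinvAlgebra k A C ψ hψ g, ∀ a : A,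
            φ (b * a) = b * φ a}) ∧
     (∃ θ : (coinvAlgebra k A C ψ hψ g) ⊗[k] C →ₗ[k] A,
        Function.Bijective θ ∧
        (∀ (b : coinvAlgebra k A C ψ hψ g) (x : (coinvAlgebra k A C ψ hψ g) ⊗[k] C),
          θ (LinearMap.rTensor C (LinearMap.mulLeft k b) x) = (b : A) * θ x) ∧
        (∀ x : (coinvAlgebra k A C ψ hψ g) ⊗[k] C,
          ψ (g ⊗ₜ[k] θ x) =
            LinearMap.rTensor C θ
              ((TensorProduct.assoc k (coinvAlgebra k A C ψ hψ g) C C).symm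
                (LinearMap.lTensor _ (comul (R := k)) x))))) := by
  classical
  have hco := coact_coassoc hψ hg
  have hBmul : ∀ b ∈ coinvAlgebra k A C ψ hψ g, ∀ (f : C →ₗ[k] A) (a : A),
      dact (coact ψ g) LinearMap.id f (b * a) = b * dact (coact ψ g) LinearMap.id f a :=
    fun b hb f a => dact_smul _ f b a (coact_mul hψ ((mem_coinv hψ b).1 hb) a)
  constructor
  · rintro ⟨l, m, hl, hlm, hml⟩
    have hm : ∀ c, coact ψ g (m c) = LinearMap.rTensor C m (comul c) := by
      have h1 := sig_conv hψ hl m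
      rw [hlm, sig_unit hψ] at h1
      have h2 : cact m (TensorProduct.mk k A C 1) = coact ψ g ∘ₗ m := by
        rw [h1, ← cact_conv, hml, cact_unit]
      intro c
      rw [← cact_mk, h2]
      rfl
    have hp : ∀ a, dact (coact ψ g) LinearMap.id l a ∈ coinvAlgebra k A C ψ hψ g := by
      intro a
      rw [mem_coinv, coact_dact hψ hg, (memQ_iff l).1 hl, dact_flip]
    have hpm : ∀ c, dact (coact ψ g) LinearMap.id l (m c) = convUnit k A C c := by
      intro c
      rw [dact_mu _ _ _ m hm, LinearMap.id_comp, cact_eq_conv, hml]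
    have hid : dact (coact ψ g) (dact (coact ψ g) LinearMap.id l) m = LinearMap.id := by
      rw [← dact_cact _ hco, cact_eq_conv, hlm, dact_unit hψ hg]
    refine ⟨⟨?_, ?_⟩, ?_⟩
    · intro f f' hff
      rw [canStar_eq, canStar_eq] at hff
      have h1 : cact m f = cact m f' := by
        ext c
        have := LinearMap.congr_fun hff (m c)
        rwa [dact_mu _ _ _ m hm, dact_mu _ _ _ m hm, LinearMap.id_comp] at this
      have h2 := congrArg (cact l) h1
      rwa [← cact_conv, ← cact_conv, hlm, cact_unit, cact_unit] at h2
    · ext φ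
      constructor
      · rintro ⟨f, rfl⟩ b hb a
        rw [canStar_eq]
        exact hBmul b hb f a
      · intro hφ
        refine ⟨cact l (φ ∘ₗ m), ?_⟩
        rw [canStar_eq, dact_cact _ hco]
        ext a
        have h1 := congrArg φ (LinearMap.congr_fun hid a)
        refine Eq.trans ?_ h1
        simp only [dact, LinearMap.comp_apply]
        generalize coact ψ g a = s
        induction s with
        | zero => simp
        | add x y hx hy => simp only [map_add, hx, hy]
        | tmul u v =>
          have := hφ _ (hp u) (m v)
          simp only [dact, LinearMap.comp_apply] at this
          simp only [TensorProduct.map_tmul, actMap_tmul, smul_eq_mul, LinearMap.comp_apply, this]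
    · let B := coinvAlgebra k A C ψ hψ g
      let p : A →ₗ[k] B := LinearMap.codRestrict (Subalgebra.toSubmodule B)
        (dact (coact ψ g) LinearMap.id l) hp
      have hpc : ∀ a, (p a : A) = dact (coact ψ g) LinearMap.id l a := fun a => rfl
      let θ : B ⊗[k] C →ₗ[k] A := LinearMap.mul' k A ∘ₗ TensorProduct.map B.val.toLinearMap m
      have hθ : ∀ (b : B) c, θ (b ⊗ₜ c) = (b : A) * m c := fun b c => by simp [θ]
      have hρθ : ∀ (b : B) c, coact ψ g (θ (b ⊗ₜ c)) =
          (b : A) • LinearMap.rTensor C m (comul c) := by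
        intro b c
        rw [hθ, coact_mul hψ ((mem_coinv hψ _).1 b.2), hm]
      let inv : A →ₗ[k] B ⊗[k] C := LinearMap.rTensor C p ∘ₗ coact ψ g
      have hinv1 : ∀ x, inv (θ x) = x := by
        intro x
        induction x with
        | zero => simp
        | add x y hx hy => rw [map_add, map_add, hx, hy]
        | tmul b c =>
          simp only [inv, LinearMap.comp_apply, hρθ]
          have : ∀ s : C ⊗[k] C, LinearMap.rTensor C p ((b : A) • LinearMap.rTensor C m s) =
              b ⊗ₜ[k] TensorProduct.lid k C (LinearMap.rTensor C counit s) := by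
            intro s
            induction s with
            | zero => simp
            | add x y hx hy => simp only [map_add, smul_add, hx, hy, tmul_add]
            | tmul u v =>
              have h : p ((b : A) * m u) = counit (R := k) u • b := by
                apply Subtype.ext
                rw [hpc, hBmul _ b.2, hpm]
                simp [convUnit, Algebra.algebraMap_eq_smul_one]
              simp [TensorProduct.smul_tmul', h]
          rw [this, Coalgebra.rTensor_counit_comul]
          simp
      have hinv2 : ∀ a, θ (inv a) = a := by
        intro a
        refine Eq.trans ?_ (LinearMap.congr_fun hid a)
        change θ (LinearMap.rTensor C p (coact ψ g a)) = actMap k A A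
          (TensorProduct.map (dact (coact ψ g) LinearMap.id l) m (coact ψ g a))
        generalize coact ψ g a = s
        induction s with
        | zero => simp
        | add x y hx hy => simp only [map_add, hx, hy]
        | tmul u v => simp [hθ, hpc]
      refine ⟨θ, ⟨Function.LeftInverse.injective hinv1, Function.RightInverse.surjective hinv2⟩,
        ?_, ?_⟩
      · intro b x
        induction x with
        | zero => simp
        | add x y hx hy => simp only [map_add, hx, hy, mul_add]
        | tmul b' c =>
          rw [LinearMap.rTensor_tmul, hθ, hθ]
          simp [mul_assoc]
      · intro x
        rw [← coact_apply]
        induction x with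
        | zero => simp
        | add x y hx hy => simp only [map_add, hx, hy]
        | tmul b c =>
          rw [hρθ, LinearMap.lTensor_tmul]
          generalize (comul c : C ⊗[k] C) = s
          induction s with
          | zero => simp
          | add x y hx hy => simp only [map_add, smul_add, hx, hy, tmul_add]
          | tmul u v => simp [hθ, TensorProduct.smul_tmul']
  · rintro ⟨⟨hinj, hrange⟩, θ, hbij, hlin, hcol⟩
    let B := coinvAlgebra k A C ψ hψ g
    let m : C →ₗ[k] A := θ ∘ₗ TensorProduct.mk k B C 1
    have hθ : ∀ (b : B) c, θ (b ⊗ₜ c) = (b : A) * m c := by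
      intro b c
      have := hlin b (1 ⊗ₜ c)
      simpa [m] using this
    have hm : ∀ c, coact ψ g (m c) = LinearMap.rTensor C m (comul c) := by
      intro c
      have := hcol (1 ⊗ₜ c)
      rw [LinearMap.lTensor_tmul] at this
      refine this.trans ?_
      generalize (comul c : C ⊗[k] C) = s
      induction s with
      | zero => simp
      | add x y hx hy => simp only [map_add, hx, hy, tmul_add]
      | tmul u v => simp [m]
    let e : B ⊗[k] C ≃ₗ[k] A := LinearEquiv.ofBijective θ hbij
    have he : ∀ x, e.symm (θ x) = x := fun x => e.symm_apply_apply x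
    let q : A →ₗ[k] B := (TensorProduct.rid k B).toLinearMap ∘ₗ
      LinearMap.lTensor B (counit (R := k)) ∘ₗ e.symm.toLinearMap
    let p : A →ₗ[k] A := B.val.toLinearMap ∘ₗ q
    have hpθ : ∀ (b : B) c, p ((b : A) * m c) = counit (R := k) c • (b : A) := by
      intro b c
      rw [← hθ]
      simp [p, q, he]
    have hpB : ∀ a, p a ∈ B := fun a => (q a).2
    have hplin : ∀ b ∈ B, ∀ a, p (b * a) = b * p a := by
      intro b hb a
      obtain ⟨x, rfl⟩ := hbij.2 a
      induction x with
      | zero => simp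
      | add x y hx hy => simp only [map_add, mul_add, hx, hy]
      | tmul b' c =>
        rw [hθ, ← mul_assoc, hpθ]
        have := hpθ (⟨b, hb⟩ * b') c
        simpa using this
    have hpr : p ∈ Set.range (canStar k A C ψ g) := by
      rw [hrange]
      exact hplin
    obtain ⟨l, hl⟩ := hpr
    rw [canStar_eq] at hl
    have hpm : p ∘ₗ m = convUnit k A C := by
      ext c
      have := hpθ 1 c
      simpa [convUnit, Algebra.algebraMap_eq_smul_one] using this
    have hml : conv k A C m l = convUnit k A C := by
      rw [← hpm, ← hl]
      ext c
      rw [LinearMap.comp_apply, dact_mu _ _ _ m hm, LinearMap.id_comp, cact_eq_conv]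
    have hlm : conv k A C l m = convUnit k A C := by
      apply hinj
      rw [canStar_eq, canStar_eq, dact_unit hψ hg, ← cact_eq_conv, dact_cact _ hco, hl]
      ext a
      obtain ⟨x, rfl⟩ := hbij.2 a
      induction x with
      | zero => simp
      | add x y hx hy => simp only [map_add, hx, hy]
      | tmul b c =>
        rw [hθ]
        have h1 : dact (coact ψ g) p m ((b : A) * m c) = (b : A) * dact (coact ψ g) p m (m c) := by
          simp only [dact, LinearMap.comp_apply, coact_mul hψ ((mem_coinv hψ _).1 b.2)]
          generalize coact ψ g (m c) = s
          induction s with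
          | zero => simp
          | add x y hx hy => simp only [map_add, smul_add, mul_add, hx, hy]
          | tmul u v =>
            have := hplin _ b.2 u
            simp only [TensorProduct.smul_tmul', smul_eq_mul, TensorProduct.map_tmul,
              actMap_tmul, this, mul_assoc]
        rw [h1, dact_mu _ _ _ m hm, hpm, cact_unit]
        rfl
    refine ⟨l, m, ?_, hlm, hml⟩
    rw [memQ_iff]
    have h1 : cact m (sig ψ l) = cact m ((TensorProduct.mk k A C).flip g ∘ₗ l) := by
      ext c
      have h2 := dact_mu (coact ψ g) LinearMap.id (sig ψ l) m hm c
      have h3 := dact_mu (coact ψ g) LinearMap.id ((TensorProduct.mk k A C).flip g ∘ₗ l) m hm c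
      rw [LinearMap.id_comp] at h2 h3
      rw [← h2, ← h3, ← coact_dact hψ hg, dact_flip, hl]
      exact (mem_coinv hψ _).1 (hpB _)
    have h2 := congrArg (cact l) h1
    rwa [← cact_conv, ← cact_conv, hlm, cact_unit, cact_unit] at h2

end Cleft2
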